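/- arXiv:1211.2439 — 2 statements merged into one kernel-verified Lean document; each statement's English description precedes it below -/
import Mathlib

section
/- Let n ≥ 2 be an integer and a > 0. Consider the Cauchy problem f'' = (n−1)(1+(f')²)·coth(f), f(0) = a, f'(0) = 0, where coth(x) = cosh(x)/sinh(x). Then this problem has a unique maximal solution f(a,·), its maximal interval of existence is the open symmetric interval I_a = (−T(a), T(a)), and T(a) = sinh^{n−1}(a) · ∫_a^∞ (sinh^{2n−2}(u) − sinh^{2n−2}(a))^{−1/2} du. -/
/-- `T n a` is the half-height of the rotational minimal `n`-catenoid: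
`T(a) = sinh^{n-1}(a) · ∫_a^∞ (sinh^{2n-2}(u) − sinh^{2n-2}(a))^{-1/2} du`. -/
noncomputable def T (n : ℕ) (a : ℝ) : ℝ :=
  Real.sinh a ^ (n - 1) *
    ∫ u in Set.Ioi a,
      (Real.sinh u ^ (2 * n - 2) - Real.sinh a ^ (2 * n - 2)) ^ (-(1 : ℝ) / 2)

/-- `f` solves the catenary ODE `f'' = (n-1)(1+(f')²) coth(f)` on the set `I`,
with initial conditions `f(0) = a`, `f'(0) = 0`. -/
def IsCatenarySolOn (n : ℕ) (a : ℝ) (I : Set ℝ) (f : ℝ → ℝ) : Prop :=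
  (0 : ℝ) ∈ I ∧ f 0 = a ∧ deriv f 0 = 0 ∧
    ∀ t ∈ I, HasDerivAt f (deriv f t) t ∧
      HasDerivAt (deriv f)
        (((n : ℝ) - 1) * (1 + deriv f t ^ 2) * (Real.cosh (f t) / Real.sinh (f t))) t

open Real Set Filter Topology MeasureTheory

namespace Catenary

/-- The height as a function of the parameter `s`, where `f' = sinh s`. -/
noncomputable def F (k : ℕ) (a s : ℝ) : ℝ := arsinh (sinh a * (cosh s) ^ (1 / (k : ℝ)))

/-- The density `dt/ds`. -/
noncomputable def phi (k : ℕ) (a s : ℝ) : ℝ :=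
  sinh (F k a s) / (k * cosh s * cosh (F k a s))

/-- The time as a function of the parameter. -/
noncomputable def tau (k : ℕ) (a s : ℝ) : ℝ := ∫ x in (0 : ℝ)..s, phi k a x

variable {k : ℕ} {a : ℝ}

lemma sinh_F_pos (ha : 0 < a) (s : ℝ) : 0 < sinh (F k a s) := by
  rw [F, sinh_arsinh]
  have := sinh_pos_iff.2 ha
  have := cosh_pos s
  positivity

lemma sinh_F_pow (hk : 1 ≤ k) (s : ℝ) :
    sinh (F k a s) ^ k = sinh a ^ k * cosh s := by
  rw [F, sinh_arsinh, mul_pow, one_div, Real.rpow_inv_natCast_pow (cosh_pos s).le (by omega)]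

lemma eq_F (hk : 1 ≤ k) (ha : 0 < a) {g s : ℝ} (hg : 0 < sinh g)
    (h : sinh g ^ (2 * k) = sinh a ^ (2 * k) * (1 + sinh s ^ 2)) : g = F k a s := by
  apply sinh_injective
  have h1 := sinh_F_pow (a := a) hk s
  refine (pow_left_inj₀ hg.le (sinh_F_pos ha s).le (n := 2 * k) (by omega)).1 ?_
  rw [h, mul_comm 2 k, pow_mul, pow_mul, h1, mul_pow, cosh_sq']

lemma F_zero : F k a 0 = a := by simp [F]

lemma F_neg (s : ℝ) : F k a (-s) = F k a s := by simp [F]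

lemma phi_neg (s : ℝ) : phi k a (-s) = phi k a s := by simp [phi, F_neg]

lemma hasDerivAt_F (hk : 1 ≤ k) (s : ℝ) :
    HasDerivAt (F k a) (sinh s * phi k a s) s := by
  have hc := cosh_pos s
  have h := (((hasDerivAt_cosh s).rpow_const (p := 1 / (k : ℝ)) (Or.inl hc.ne')).const_mul
    (sinh a)).arsinh
  rw [← cosh_arsinh] at h
  convert! h using 1
  change _ = (cosh (F k a s))⁻¹ • (_ : ℝ)
  have h2 : sinh (F k a s) = sinh a * (cosh s) ^ (1 / (k : ℝ)) := by rw [F, sinh_arsinh]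
  rw [phi, h2, Real.rpow_sub hc, Real.rpow_one, smul_eq_mul]
  have := cosh_pos (F k a s)
  have : (k : ℝ) ≠ 0 := by positivity
  field_simp

lemma continuous_phi (hk : 1 ≤ k) : Continuous (phi k a) := by
  have hF : Continuous (F k a) :=
    continuous_iff_continuousAt.2 fun s => (hasDerivAt_F hk s).continuousAt
  unfold phi
  refine Continuous.div (by fun_prop) (by fun_prop) fun s => ?_
  have := cosh_pos (F k a s)
  have := cosh_pos s
  have : (k : ℝ) ≠ 0 := by positivity
  positivity

lemma phi_pos (hk : 1 ≤ k) (ha : 0 < a) (s : ℝ) : 0 < phi k a s := by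
  have := cosh_pos (F k a s)
  have := cosh_pos s
  have := sinh_F_pos (k := k) ha s
  unfold phi
  positivity

lemma phi_le (hk : 1 ≤ k) (ha : 0 < a) (s : ℝ) : phi k a s ≤ 2 * exp (-s) := by
  have h1 := cosh_pos (F k a s)
  have h2 := cosh_pos s
  have h3 := sinh_F_pos (k := k) ha s
  have h4 := sinh_lt_cosh (F k a s)
  have hk' : (1 : ℝ) ≤ k := by exact_mod_cast hk
  unfold phi
  rw [div_le_iff₀ (by positivity)]
  have h5 : 1 ≤ 2 * exp (-s) * cosh s := by
    rw [cosh_eq]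
    have : exp (-s) * exp s = 1 := by rw [← exp_add]; simp
    nlinarith [exp_pos (-s)]
  have h6 : 1 ≤ 2 * exp (-s) * cosh s * k := by nlinarith
  nlinarith

lemma integrable_phi (hk : 1 ≤ k) (ha : 0 < a) : IntegrableOn (phi k a) (Ioi 0) := by
  refine Integrable.mono' ((integrableOn_exp_neg_Ioi 0).const_mul 2)
    (continuous_phi hk).aestronglyMeasurable ?_
  filter_upwards with s
  rw [norm_of_nonneg (phi_pos hk ha s).le]
  exact phi_le hk ha s

lemma hasDerivAt_tau (hk : 1 ≤ k) (s : ℝ) : HasDerivAt (tau k a) (phi k a s) s :=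
  (continuous_phi hk).integral_hasStrictDerivAt 0 s |>.hasDerivAt

lemma tau_zero : tau k a 0 = 0 := by simp [tau]

lemma tau_neg (s : ℝ) : tau k a (-s) = - tau k a s := by
  unfold tau
  have := intervalIntegral.integral_comp_neg (a := 0) (b := s) (phi k a)
  simp only [phi_neg, neg_zero] at this
  rw [this, intervalIntegral.integral_symm]

lemma strictMono_tau (hk : 1 ≤ k) (ha : 0 < a) : StrictMono (tau k a) :=
  strictMono_of_hasDerivAt_pos (hasDerivAt_tau hk) (phi_pos hk ha)

lemma image_F (hk : 1 ≤ k) (ha : 0 < a) : F k a '' Ioi 0 = Ioi a := by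
  have hsa := sinh_pos_iff.2 ha
  ext u
  constructor
  · rintro ⟨s, hs, rfl⟩
    have hs : 0 < s := hs
    have : sinh a ^ k < sinh (F k a s) ^ k := by
      rw [sinh_F_pow hk]
      have := one_lt_cosh.2 hs.ne'
      have : 0 < sinh a ^ k := by positivity
      nlinarith
    exact sinh_lt_sinh.1 (lt_of_pow_lt_pow_left₀ k (sinh_F_pos ha s).le this)
  · intro hu
    have hu : a < u := hu
    have hsu := sinh_lt_sinh.2 hu
    have hr : 1 < (sinh u / sinh a) ^ (2 * k) :=
      one_lt_pow₀ ((one_lt_div hsa).2 hsu) (by omega)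
    refine ⟨arsinh (√((sinh u / sinh a) ^ (2 * k) - 1)), ?_, ?_⟩
    · exact arsinh_pos_iff.2 (sqrt_pos.2 (by linarith))
    · symm
      apply eq_F hk ha (hsa.trans hsu)
      rw [sinh_arsinh, sq_sqrt (by linarith), div_pow]
      field_simp
      ring

lemma T_eq (hk : 1 ≤ k) (ha : 0 < a) : T (k + 1) a = ∫ s in Ioi 0, phi k a s := by
  have hsa := sinh_pos_iff.2 ha
  have hinj : InjOn (F k a) (Ioi 0) := by
    intro s hs t ht h
    have h1 := sinh_F_pow (a := a) hk s
    rw [h, sinh_F_pow hk] at h1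
    have h2 := mul_left_cancel₀ (by positivity) h1
    exact (cosh_strictMonoOn.injOn (mem_Ici.2 (le_of_lt ht)) (mem_Ici.2 (le_of_lt hs)) h2).symm
  unfold T
  rw [← image_F hk ha, integral_image_eq_integral_abs_deriv_smul measurableSet_Ioi
    (fun s _ => (hasDerivAt_F hk s).hasDerivWithinAt) hinj, ← integral_const_mul]
  refine setIntegral_congr_fun measurableSet_Ioi fun s hs => ?_
  have hss := sinh_pos_iff.2 hs
  have hp := phi_pos hk ha s
  have e : 2 * (k + 1) - 2 = 2 * k := by omega
  have e1 : k + 1 - 1 = k := by omega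
  simp only [e, e1, smul_eq_mul]
  have e2 : sinh (F k a s) ^ (2 * k) - sinh a ^ (2 * k) = (sinh a ^ k * sinh s) ^ 2 := by
    rw [mul_comm 2 k, pow_mul, pow_mul, sinh_F_pow hk, mul_pow, mul_pow, cosh_sq]
    ring
  rw [abs_of_pos (by positivity), e2, neg_div, Real.rpow_neg (by positivity), ← sqrt_eq_rpow,
    sqrt_sq (by positivity)]
  field_simp

lemma range_tau (hk : 1 ≤ k) (ha : 0 < a) :
    range (tau k a) = Ioo (-(T (k + 1) a)) (T (k + 1) a) := by
  have hm := strictMono_tau hk ha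
  have hT : Tendsto (tau k a) atTop (𝓝 (T (k + 1) a)) := by
    rw [T_eq hk ha]
    exact intervalIntegral_tendsto_integral_Ioi 0 (integrable_phi hk ha) tendsto_id
  have hlt : ∀ s, tau k a s < T (k + 1) a := fun s =>
    (hm (lt_add_one s)).trans_le (hm.monotone.ge_of_tendsto hT _)
  have hcont : Continuous (tau k a) :=
    continuous_iff_continuousAt.2 fun s => (hasDerivAt_tau hk s).continuousAt
  ext t
  constructor
  · rintro ⟨s, rfl⟩
    refine ⟨?_, hlt s⟩
    have := hlt (-s)
    rw [tau_neg] at this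
    linarith
  · rintro ⟨h1, h2⟩
    obtain ⟨s1, hs1⟩ := (hT.eventually (lt_mem_nhds h2)).exists
    obtain ⟨s2, hs2⟩ := (hT.eventually (lt_mem_nhds (neg_lt.1 h1))).exists
    refine mem_range_of_exists_le_of_exists_ge hcont ⟨-s2, ?_⟩ ⟨s1, hs1.le⟩
    rw [tau_neg]
    linarith

/-- Any solution is given by the parametrization. -/
lemma sol_param (hk : 1 ≤ k) (ha : 0 < a) {J : Set ℝ} {g : ℝ → ℝ} (hJ : IsOpen J)
    (hJc : J.OrdConnected) (hg : IsCatenarySolOn (k + 1) a J g) {t : ℝ} (ht : t ∈ J) :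
    ∃ s, tau k a s = t ∧ g t = F k a s := by
  obtain ⟨h0, hg0, hg0', hd⟩ := hg
  have hsa := sinh_pos_iff.2 ha
  have hpc := hJc.isPreconnected
  push_cast at hd
  simp only [add_sub_cancel_right] at hd
  -- first integral
  have hQ : ∀ x ∈ J, HasDerivAt (fun y => sinh (g y) ^ (2 * k) / (1 + deriv g y ^ 2)) 0 x := by
    intro x hx
    obtain ⟨d1, d2⟩ := hd x hx
    have hp : 0 < 1 + deriv g x ^ 2 := by positivity
    convert! ((d1.sinh).pow (2 * k)).div ((d2.pow 2).const_add 1) hp.ne' using 1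
    symm
    rw [div_eq_zero_iff]
    left
    obtain ⟨m, hm⟩ : ∃ m, 2 * k = m + 1 := ⟨2 * k - 1, by omega⟩
    have hmm : ((m : ℝ) + 1) = 2 * k := by exact_mod_cast hm.symm
    have hm0 : m ≠ 0 := by omega
    simp only [hm, Nat.add_sub_cancel, Pi.pow_apply]
    push_cast
    by_cases hz : sinh (g x) = 0
    · simp [hz, hm0]
    · rw [hmm]
      field_simp
      ring
  have hQc : ∀ x ∈ J, sinh (g x) ^ (2 * k) = sinh a ^ (2 * k) * (1 + deriv g x ^ 2) := by
    intro x hx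
    have := hJ.is_const_of_deriv_eq_zero hpc
      (fun y hy => (hQ y hy).differentiableAt.differentiableWithinAt)
      (fun y hy => (hQ y hy).deriv) hx h0
    simp only [hg0, hg0'] at this
    have hp : 0 < 1 + deriv g x ^ 2 := by positivity
    rw [div_eq_iff hp.ne'] at this
    simpa using this
  have hne : ∀ x ∈ J, g x ≠ 0 := by
    intro x hx hz
    have := hQc x hx
    rw [hz, sinh_zero, zero_pow (by omega)] at this
    have : 0 < sinh a ^ (2 * k) * (1 + deriv g x ^ 2) := by positivity
    linarith
  have hpos : ∀ x ∈ J, 0 < g x := by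
    intro x hx
    by_contra hcon
    have hco : ContinuousOn g J := fun y hy => (hd y hy).1.continuousAt.continuousWithinAt
    obtain ⟨y, hy, hy0⟩ := hpc.intermediate_value hx h0 hco
      (show (0 : ℝ) ∈ Icc (g x) (g 0) from ⟨not_lt.1 hcon, by rw [hg0]; exact ha.le⟩)
    exact hne y hy hy0
  have hF : ∀ x ∈ J, g x = F k a (arsinh (deriv g x)) := by
    intro x hx
    apply eq_F hk ha (sinh_pos_iff.2 (hpos x hx))
    rw [sinh_arsinh]
    exact hQc x hx
  have hS : ∀ x ∈ J, HasDerivAt (fun y => tau k a (arsinh (deriv g y)) - y) 0 x := by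
    intro x hx
    obtain ⟨d1, d2⟩ := hd x hx
    have h1 := ((hasDerivAt_tau (a := a) hk (arsinh (deriv g x))).comp x d2.arsinh).sub
      (hasDerivAt_id x)
    convert! h1 using 1
    unfold phi
    rw [← hF x hx, cosh_arsinh, smul_eq_mul]
    have hp : 0 < 1 + deriv g x ^ 2 := by positivity
    have hs : √(1 + deriv g x ^ 2) * √(1 + deriv g x ^ 2) = 1 + deriv g x ^ 2 :=
      mul_self_sqrt hp.le
    have hs0 := sqrt_pos.2 hp
    set r := √(1 + deriv g x ^ 2)
    rw [← hs]
    have := sinh_pos_iff.2 (hpos x hx)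
    have := cosh_pos (g x)
    have : (k : ℝ) ≠ 0 := by positivity
    field_simp
    ring
  have := hJ.is_const_of_deriv_eq_zero hpc
      (fun y hy => (hS y hy).differentiableAt.differentiableWithinAt)
      (fun y hy => (hS y hy).deriv) ht h0
  simp only [hg0', arsinh_zero, tau_zero] at this
  exact ⟨arsinh (deriv g t), by linarith, hF t ht⟩

lemma main (hk : 1 ≤ k) (ha : 0 < a) :
    ∃ f : ℝ → ℝ,
      IsCatenarySolOn (k + 1) a (Set.Ioo (-(T (k + 1) a)) (T (k + 1) a)) f ∧
        ∀ (J : Set ℝ) (g : ℝ → ℝ), IsOpen J → J.OrdConnected →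
          IsCatenarySolOn (k + 1) a J g →
            J ⊆ Set.Ioo (-(T (k + 1) a)) (T (k + 1) a) ∧ Set.EqOn f g J := by
  have hr := range_tau hk ha
  have hm := strictMono_tau hk ha
  have hemb : IsOpenEmbedding (tau k a) :=
    ⟨hm.isEmbedding_of_ordConnected (by rw [hr]; exact ordConnected_Ioo),
      by rw [hr]; exact isOpen_Ioo⟩
  set e := hemb.toOpenPartialHomeomorph (tau k a) with he
  have hl : ∀ s, e.symm (tau k a s) = s := fun s => hemb.toOpenPartialHomeomorph_left_inv
  have hdσ : ∀ t ∈ range (tau k a), HasDerivAt e.symm (phi k a (e.symm t))⁻¹ t := by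
    intro t ht
    refine e.hasDerivAt_symm (by simpa [he] using ht) (phi_pos hk ha _).ne' ?_
    simpa [he] using hasDerivAt_tau hk _
  have hdf : ∀ t ∈ range (tau k a),
      HasDerivAt (fun t => F k a (e.symm t)) (sinh (e.symm t)) t := by
    intro t ht
    convert! (hasDerivAt_F hk (e.symm t)).comp t (hdσ t ht) using 1
    have := (phi_pos hk ha (e.symm t)).ne'
    field_simp
  have h0 : (0 : ℝ) ∈ range (tau k a) := ⟨0, tau_zero⟩
  have hσ0 : e.symm 0 = 0 := by simpa [tau_zero] using hl 0
  rw [← hr]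
  refine ⟨fun t => F k a (e.symm t), ⟨h0, ?_, ?_, ?_⟩, ?_⟩
  · simp [hσ0, F_zero]
  · rw [(hdf 0 h0).deriv, hσ0, sinh_zero]
  · intro t ht
    have hev : deriv (fun t => F k a (e.symm t)) =ᶠ[𝓝 t] fun t => sinh (e.symm t) := by
      filter_upwards [hemb.isOpen_range.mem_nhds ht] with y hy using (hdf y hy).deriv
    refine ⟨(hdf t ht).differentiableAt.hasDerivAt, ?_⟩
    refine HasDerivAt.congr_of_eventuallyEq ?_ hev
    rw [(hdf t ht).deriv]
    convert! (hdσ t ht).sinh using 1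
    rw [← cosh_sq', phi]
    have := sinh_F_pos (k := k) ha (e.symm t)
    have := cosh_pos (e.symm t)
    push_cast
    field_simp
    ring
  · intro J g hJ hJc hg
    have key := fun t (ht : t ∈ J) => sol_param hk ha hJ hJc hg ht
    refine ⟨fun t ht => ?_, fun t ht => ?_⟩
    · obtain ⟨s, hs, -⟩ := key t ht
      exact ⟨s, hs⟩
    · obtain ⟨s, rfl, h⟩ := key t ht
      simp only [hl, h]

end Catenary

/-- The Cauchy problem `f'' = (n-1)(1+(f')²) coth f`, `f(0)=a>0`, `f'(0)=0` has a
unique maximal solution; its maximal interval of existence is the open symmetric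
interval `I_a = (−T(a), T(a))`, where
`T(a) = sinh^{n-1}(a) · ∫_a^∞ (sinh^{2n-2}(u) − sinh^{2n-2}(a))^{-1/2} du`. -/
theorem catenary_maximal_solution (n : ℕ) (hn : 2 ≤ n) (a : ℝ) (ha : 0 < a) :
    ∃ f : ℝ → ℝ,
      IsCatenarySolOn n a (Set.Ioo (-(T n a)) (T n a)) f ∧
        ∀ (J : Set ℝ) (g : ℝ → ℝ), IsOpen J → J.OrdConnected →
          IsCatenarySolOn n a J g →
            J ⊆ Set.Ioo (-(T n a)) (T n a) ∧ Set.EqOn f g J := by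
  obtain ⟨k, rfl⟩ : ∃ k, n = k + 1 := ⟨n - 1, by omega⟩
  exact Catenary.main (by omega) ha
end

section
/- Let n ≥ 2 be an integer and let 0 < a < b. Let f(a,·) and f(b,·) be the maximal solutions of f'' = (n−1)(1+(f')²)·coth(f) with f(0) = a, f'(0) = 0 and f(0) = b, f'(0) = 0 respectively, defined on (−T(a), T(a)) and (−T(b), T(b)). Then there exists exactly one t₀ with 0 < t₀ < min(T(a), T(b)) such that f(a, t₀) = f(b, t₀); consequently, by evenness, the generating catenaries t ↦ (tanh(f(a,t)), t) and t ↦ (tanh(f(b,t)), t) intersect at exactly two points, symmetric with respect to t = 0. -/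
open MeasureTheory Set Filter Topology

/-- Normalised time density. -/
noncomputable def catH (n : ℕ) (a u : ℝ) : ℝ :=
  ((Real.sinh u / Real.sinh a) ^ (2 * n - 2) - 1) ^ (-(1 : ℝ) / 2)

noncomputable def catG (n : ℕ) (a : ℝ) : ℝ → ℝ := (Ioi a).indicator (catH n a)

noncomputable def catPhi (n : ℕ) (a x : ℝ) : ℝ := ∫ u in a..x, catG n a u

lemma catH_eq (n : ℕ) (hn : 2 ≤ n) {a u : ℝ} (ha : 0 < a) (hu : a < u) :
    Real.sinh a ^ (n - 1) *
      (Real.sinh u ^ (2 * n - 2) - Real.sinh a ^ (2 * n - 2)) ^ (-(1 : ℝ) / 2) = catH n a u := by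
  have hs : 0 < Real.sinh a := Real.sinh_pos_iff.2 ha
  have hlt : Real.sinh a < Real.sinh u := Real.sinh_lt_sinh.2 hu
  have hp : Real.sinh a ^ (2 * n - 2) < Real.sinh u ^ (2 * n - 2) :=
    pow_lt_pow_left₀ hlt hs.le (by omega)
  have hpos : 0 < Real.sinh a ^ (2 * n - 2) := pow_pos hs _
  have e : (Real.sinh u / Real.sinh a) ^ (2 * n - 2) - 1 =
      (Real.sinh u ^ (2 * n - 2) - Real.sinh a ^ (2 * n - 2)) / Real.sinh a ^ (2 * n - 2) := by
    rw [div_pow]; field_simp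
  unfold catH
  rw [e, Real.div_rpow (by linarith) hpos.le]
  have e2 : (Real.sinh a ^ (2 * n - 2)) ^ (-(1 : ℝ) / 2) = (Real.sinh a ^ (n - 1))⁻¹ := by
    have : 2 * n - 2 = (n - 1) * 2 := by omega
    rw [this, pow_mul, neg_div, Real.rpow_neg (by positivity), ← Real.sqrt_eq_rpow,
      Real.sqrt_sq (by positivity)]
  rw [e2, div_inv_eq_mul, mul_comm]

lemma cat_base_pos (n : ℕ) (hn : 2 ≤ n) {a u : ℝ} (ha : 0 < a) (hu : a < u) :
    0 < (Real.sinh u / Real.sinh a) ^ (2 * n - 2) - 1 := by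
  have hs : 0 < Real.sinh a := Real.sinh_pos_iff.2 ha
  have hlt : Real.sinh a < Real.sinh u := Real.sinh_lt_sinh.2 hu
  have := one_lt_pow₀ ((one_lt_div hs).2 hlt) (n := 2 * n - 2) (by omega)
  linarith

lemma catH_pos (n : ℕ) (hn : 2 ≤ n) {a u : ℝ} (ha : 0 < a) (hu : a < u) : 0 < catH n a u :=
  Real.rpow_pos_of_pos (cat_base_pos n hn ha hu) _

lemma catH_lt (n : ℕ) (hn : 2 ≤ n) {a b u : ℝ} (ha : 0 < a) (hab : a < b) (hu : b < u) :
    catH n a u < catH n b u := by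
  have hs : 0 < Real.sinh a := Real.sinh_pos_iff.2 ha
  have hlt : Real.sinh a < Real.sinh b := Real.sinh_lt_sinh.2 hab
  have hu0 : 0 < Real.sinh u := Real.sinh_pos_iff.2 (by linarith)
  refine Real.rpow_lt_rpow_of_neg (cat_base_pos n hn (ha.trans hab) hu) ?_ (by norm_num)
  have : Real.sinh u / Real.sinh b < Real.sinh u / Real.sinh a :=
    div_lt_div_of_pos_left hu0 hs hlt
  have := pow_lt_pow_left₀ this (div_pos hu0 (hs.trans hlt)).le (n := 2 * n - 2) (by omega)
  linarith

lemma T_eq (n : ℕ) (hn : 2 ≤ n) {a : ℝ} (ha : 0 < a) : T n a = ∫ u in Ioi a, catH n a u := by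
  unfold T
  rw [← integral_const_mul]
  exact setIntegral_congr_fun measurableSet_Ioi fun u hu => catH_eq n hn ha hu

lemma catH_int (n : ℕ) (hn : 2 ≤ n) {a : ℝ} (ha : 0 < a) (hT : 0 < T n a) :
    IntegrableOn (catH n a) (Ioi a) := by
  by_contra h
  rw [T_eq n hn ha, integral_undef h] at hT
  exact lt_irrefl _ hT

lemma catG_int (n : ℕ) (hn : 2 ≤ n) {a : ℝ} (ha : 0 < a) (hT : 0 < T n a) :
    Integrable (catG n a) :=
  (integrable_indicator_iff measurableSet_Ioi).2 (catH_int n hn ha hT)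

lemma catPhi_cont (n : ℕ) (hn : 2 ≤ n) {a : ℝ} (ha : 0 < a) (hT : 0 < T n a) :
    Continuous (catPhi n a) :=
  intervalIntegral.continuous_primitive
    (fun _ _ => (catG_int n hn ha hT).intervalIntegrable) a

lemma catPhi_tendsto (n : ℕ) (hn : 2 ≤ n) {a : ℝ} (ha : 0 < a) (hT : 0 < T n a) :
    Tendsto (catPhi n a) atTop (𝓝 (T n a)) := by
  have h := intervalIntegral_tendsto_integral_Ioi a (catG_int n hn ha hT).integrableOn tendsto_id
  have e : ∫ u in Ioi a, catG n a u = T n a := by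
    rw [T_eq n hn ha]
    exact setIntegral_congr_fun measurableSet_Ioi fun u hu => indicator_of_mem hu _
  rw [e] at h
  exact h

lemma catPhi_sub (n : ℕ) (hn : 2 ≤ n) {a : ℝ} (ha : 0 < a) (hT : 0 < T n a) (x y : ℝ) :
    catPhi n a y - catPhi n a x = ∫ u in x..y, catG n a u :=
  intervalIntegral.integral_interval_sub_left (catG_int n hn ha hT).intervalIntegrable
    (catG_int n hn ha hT).intervalIntegrable

lemma catPhi_mono (n : ℕ) (hn : 2 ≤ n) {a : ℝ} (ha : 0 < a) (hT : 0 < T n a) :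
    StrictMonoOn (catPhi n a) (Ici a) := by
  intro x hx y _ hxy
  rw [← sub_pos, catPhi_sub n hn ha hT]
  refine intervalIntegral.intervalIntegral_pos_of_pos_on
    (catG_int n hn ha hT).intervalIntegrable (fun u hu => ?_) hxy
  have hau : a < u := lt_of_le_of_lt hx hu.1
  rw [catG, indicator_of_mem (show u ∈ Ioi a from hau)]
  exact catH_pos n hn ha hau

lemma catPhi_self (n : ℕ) (a : ℝ) : catPhi n a a = 0 := intervalIntegral.integral_same

lemma catPhi_lt_T (n : ℕ) (hn : 2 ≤ n) {a : ℝ} (ha : 0 < a) (hT : 0 < T n a) {x : ℝ}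
    (hx : a ≤ x) : catPhi n a x < T n a := by
  have h1 : catPhi n a x < catPhi n a (x + 1) :=
    catPhi_mono n hn ha hT hx (show a ≤ x + 1 by linarith) (by linarith)
  refine h1.trans_le (ge_of_tendsto (catPhi_tendsto n hn ha hT) ?_)
  filter_upwards [eventually_ge_atTop (x + 1)] with y hy
  exact (catPhi_mono n hn ha hT).monotoneOn (show a ≤ x + 1 by linarith)
    (show a ≤ y by linarith) hy

lemma catPhi_diff_mono (n : ℕ) (hn : 2 ≤ n) {a b : ℝ} (ha : 0 < a) (hab : a < b)
    (hTa : 0 < T n a) (hTb : 0 < T n b) :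
    StrictMonoOn (fun x => catPhi n b x - catPhi n a x) (Ici b) := by
  intro x hx y _ hxy
  have hb := ha.trans hab
  have h : 0 < (catPhi n b y - catPhi n b x) - (catPhi n a y - catPhi n a x) := by
    rw [catPhi_sub n hn ha hTa, catPhi_sub n hn hb hTb, ← intervalIntegral.integral_sub
      (catG_int n hn hb hTb).intervalIntegrable (catG_int n hn ha hTa).intervalIntegrable]
    refine intervalIntegral.intervalIntegral_pos_of_pos_on
      ((catG_int n hn hb hTb).sub (catG_int n hn ha hTa)).intervalIntegrable
      (fun u hu => ?_) hxy
    have hbu : b < u := lt_of_le_of_lt hx hu.1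
    have h1 : catG n a u = catH n a u := indicator_of_mem (show u ∈ Ioi a from hab.trans hbu) _
    have h2 : catG n b u = catH n b u := indicator_of_mem (show u ∈ Ioi b from hbu) _
    have := catH_lt n hn ha hab hbu
    simp only [h1, h2]
    linarith
  show catPhi n b x - catPhi n a x < catPhi n b y - catPhi n a y
  linarith

lemma T_lt (n : ℕ) (hn : 2 ≤ n) {a b : ℝ} (ha : 0 < a) (hab : a < b)
    (hTa : 0 < T n a) (hTb : 0 < T n b) : T n a < T n b := by
  have hb := ha.trans hab
  have hs : 0 < Real.sinh a := Real.sinh_pos_iff.2 ha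
  have hlt : Real.sinh a < Real.sinh b := Real.sinh_lt_sinh.2 hab
  set k := Real.sinh b / Real.sinh a with hk
  have hk1 : 1 < k := (one_lt_div hs).2 hlt
  set φ : ℝ → ℝ := fun u => Real.arsinh (k * Real.sinh u) with hφ
  set φ' : ℝ → ℝ := fun u => (√(1 + (k * Real.sinh u) ^ 2))⁻¹ • (k * Real.cosh u) with hφ'
  have hd : ∀ u ∈ Ioi a, HasDerivWithinAt φ (φ' u) (Ioi a) u := fun u _ =>
    (((Real.hasDerivAt_sinh u).const_mul k).arsinh).hasDerivWithinAt
  have hinj : InjOn φ (Ioi a) := by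
    intro x _ y _ h
    have := Real.arsinh_injective h
    exact Real.sinh_injective (mul_left_cancel₀ (by positivity) this)
  have him : φ '' Ioi a = Ioi b := by
    ext y
    constructor
    · rintro ⟨u, hu, rfl⟩
      have : Real.sinh a < Real.sinh u := Real.sinh_lt_sinh.2 hu
      show b < Real.arsinh (k * Real.sinh u)
      rw [← Real.sinh_lt_sinh, Real.sinh_arsinh]
      calc Real.sinh b = k * Real.sinh a := by rw [hk]; field_simp
        _ < _ := by gcongr
    · intro hy
      have hy' : Real.sinh b < Real.sinh y := Real.sinh_lt_sinh.2 hy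
      refine ⟨Real.arsinh (Real.sinh y / k), ?_, ?_⟩
      · show a < _
        rw [← Real.sinh_lt_sinh, Real.sinh_arsinh, lt_div_iff₀ (by positivity)]
        calc Real.sinh a * k = Real.sinh b := by rw [hk]; field_simp
          _ < _ := hy'
      · simp only [hφ, Real.sinh_arsinh]
        rw [mul_div_cancel₀ _ (by positivity), Real.arsinh_sinh]
  have h1 : ∀ u, 1 < φ' u := by
    intro u
    have hc : √(1 + (k * Real.sinh u) ^ 2) < k * Real.cosh u := by
      have := Real.cosh_pos u
      rw [Real.sqrt_lt' (by positivity)]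
      have := Real.cosh_sq u
      rw [mul_pow, mul_pow, this]
      nlinarith
    have h0 : 0 < √(1 + (k * Real.sinh u) ^ 2) := Real.sqrt_pos.2 (by positivity)
    simp only [hφ', smul_eq_mul]
    rw [inv_mul_eq_div]
    exact (one_lt_div h0).2 hc
  have hcomp : ∀ u, catH n b (φ u) = catH n a u := by
    intro u
    have hsb : Real.sinh b ≠ 0 := (hs.trans hlt).ne'
    have : Real.sinh (φ u) / Real.sinh b = Real.sinh u / Real.sinh a := by
      simp only [hφ, Real.sinh_arsinh, hk]
      field_simp
    simp only [catH, this]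
  have eabs : ∀ u, |φ' u| • catH n b (φ u) = φ' u * catH n a u := fun u => by
    rw [hcomp, abs_of_pos (by linarith [h1 u]), smul_eq_mul]
  have hIb := catH_int n hn hb hTb
  have hIa := catH_int n hn ha hTa
  rw [← him, integrableOn_image_iff_integrableOn_abs_deriv_smul measurableSet_Ioi hd hinj] at hIb
  have hTb' := T_eq n hn hb
  rw [← him, integral_image_eq_integral_abs_deriv_smul measurableSet_Ioi hd hinj] at hTb'
  simp only [eabs] at hIb hTb'
  rw [hTb', T_eq n hn ha, ← sub_pos, ← integral_sub hIb hIa]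
  have hp : ∀ u ∈ Ioi a, 0 < φ' u * catH n a u - catH n a u := fun u hu => by
    nlinarith [h1 u, catH_pos n hn ha hu]
  rw [setIntegral_pos_iff_support_of_nonneg_ae]
  · have : Function.support (fun u => φ' u * catH n a u - catH n a u) ∩ Ioi a = Ioi a :=
      inter_eq_right.2 fun u hu => (hp u hu).ne'
    rw [this]
    simp
  · filter_upwards [self_mem_ae_restrict measurableSet_Ioi] with u hu
    exact (hp u hu).le
  · exact hIb.sub hIa

lemma first_integral (n : ℕ) (hn : 2 ≤ n) {a R : ℝ} {f : ℝ → ℝ}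
    (hf : IsCatenarySolOn n a (Ioo (-R) R) f) {t : ℝ} (ht : t ∈ Ioo (-R) R) :
    Real.sinh (f t) ^ (2 * n - 2) = Real.sinh a ^ (2 * n - 2) * (1 + deriv f t ^ 2) := by
  obtain ⟨h0, hfa, hf0, hode⟩ := hf
  have hD : ∀ t ∈ Ioo (-R) R,
      HasDerivAt (fun s => Real.sinh (f s) ^ (2 * n - 2) / (1 + deriv f s ^ 2)) 0 t := by
    intro t ht
    obtain ⟨h1, h2⟩ := hode t ht
    have hne : 1 + deriv f t ^ 2 ≠ 0 := by positivity
    have h := (h1.sinh.pow (2 * n - 2)).div ((h2.pow 2).const_add 1) hne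
    refine HasDerivAt.congr_deriv (f := fun s => Real.sinh (f s) ^ (2 * n - 2) / (1 + deriv f s ^ 2)) h ?_
    obtain ⟨k, rfl⟩ : ∃ k, n = k + 2 := ⟨n - 2, by omega⟩
    have e1 : 2 * (k + 2) - 2 = 2 * k + 2 := by omega
    have e2 : 2 * k + 2 - 1 = 2 * k + 1 := by omega
    rw [div_eq_zero_iff]
    left
    rw [e1, e2]
    push_cast
    by_cases hz : Real.sinh (f t) = 0
    · simp [hz]
    · simp only [Pi.pow_apply, Pi.add_apply]
      field_simp
      ring
  have hc := isOpen_Ioo.is_const_of_deriv_eq_zero isPreconnected_Ioo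
    (fun s hs => (hD s hs).differentiableAt.differentiableWithinAt)
    (fun s hs => (hD s hs).deriv) ht h0
  simp only [hfa, hf0] at hc
  have hne : 1 + deriv f t ^ 2 ≠ 0 := by positivity
  rw [div_eq_iff hne] at hc
  rw [hc]; simp

lemma sol_ge (n : ℕ) (hn : 2 ≤ n) {a R : ℝ} (ha : 0 < a) {f : ℝ → ℝ}
    (hf : IsCatenarySolOn n a (Ioo (-R) R) f) {t : ℝ} (ht : t ∈ Ioo (-R) R) : a ≤ f t := by
  have hs : 0 < Real.sinh a := Real.sinh_pos_iff.2 ha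
  have hne : ∀ s ∈ Ioo (-R) R, f s ≠ 0 := by
    intro s hs' h
    have h1 := first_integral n hn hf hs'
    rw [h, Real.sinh_zero, zero_pow (by omega)] at h1
    have : 0 < Real.sinh a ^ (2 * n - 2) * (1 + deriv f s ^ 2) := by positivity
    linarith
  have hcont : ContinuousOn f (Ioo (-R) R) := fun s hs' =>
    (hf.2.2.2 s hs').1.continuousAt.continuousWithinAt
  have hpos : 0 < f t := by
    by_contra hle
    push Not at hle
    obtain ⟨s, hs', h⟩ := (isPreconnected_Ioo (a := -R) (b := R)).intermediate_value ht hf.1 hcont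
      (show (0 : ℝ) ∈ Icc (f t) (f 0) from ⟨hle, by rw [hf.2.1]; exact ha.le⟩)
    exact hne s hs' h
  by_contra hlt
  push Not at hlt
  have h1 := first_integral n hn hf ht
  have h2 : Real.sinh (f t) ^ (2 * n - 2) < Real.sinh a ^ (2 * n - 2) :=
    pow_lt_pow_left₀ (Real.sinh_lt_sinh.2 hlt) (Real.sinh_pos_iff.2 hpos).le (by omega)
  have : 0 ≤ Real.sinh a ^ (2 * n - 2) * deriv f t ^ 2 := by positivity
  nlinarith

lemma deriv_sol_pos (n : ℕ) (hn : 2 ≤ n) {a R : ℝ} (ha : 0 < a) {f : ℝ → ℝ}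
    (hf : IsCatenarySolOn n a (Ioo (-R) R) f) {t : ℝ} (ht0 : 0 < t) (ht : t < R) :
    0 < deriv f t := by
  have hm : StrictMonoOn (deriv f) (Ioo (-R) R) := by
    refine strictMonoOn_of_deriv_pos (convex_Ioo _ _)
      (fun s hs => (hf.2.2.2 s hs).2.continuousAt.continuousWithinAt) ?_
    rw [interior_Ioo]
    intro s hs
    rw [(hf.2.2.2 s hs).2.deriv]
    have h1 : 0 < f s := ha.trans_le (sol_ge n hn ha hf hs)
    have h2 : 0 < Real.sinh (f s) := Real.sinh_pos_iff.2 h1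
    have h3 := Real.cosh_pos (f s)
    have h4 : (2 : ℝ) ≤ n := by exact_mod_cast hn
    have h5 : 0 < (n : ℝ) - 1 := by linarith
    positivity
  have := hm hf.1 (show t ∈ Ioo (-R) R from ⟨by linarith, ht⟩) ht0
  rwa [hf.2.2.1] at this

lemma catPhi_deriv (n : ℕ) (hn : 2 ≤ n) {a : ℝ} (ha : 0 < a) (hT : 0 < T n a) {x : ℝ}
    (hx : a < x) : HasDerivAt (catPhi n a) (catH n a x) x := by
  have hG : catG n a x = catH n a x := indicator_of_mem (show x ∈ Ioi a from hx) _
  rw [← hG]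
  refine intervalIntegral.integral_hasDerivAt_right (catG_int n hn ha hT).intervalIntegrable
    ⟨univ, univ_mem, (catG_int n hn ha hT).aestronglyMeasurable.restrict⟩ ?_
  have hc : ContinuousAt (catH n a) x := by
    unfold catH
    refine ContinuousAt.rpow_const ?_ (Or.inl (cat_base_pos n hn ha hx).ne')
    have := Real.continuous_sinh
    fun_prop
  refine hc.congr ?_
  filter_upwards [Ioi_mem_nhds hx] with u hu
  exact (indicator_of_mem hu _).symm

lemma time_pos (n : ℕ) (hn : 2 ≤ n) {a : ℝ} (ha : 0 < a) (hT : 0 < T n a) {f : ℝ → ℝ}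
    (hf : IsCatenarySolOn n a (Ioo (-(T n a)) (T n a)) f) {t : ℝ} (ht0 : 0 < t)
    (ht : t < T n a) : catPhi n a (f t) = t := by
  have hs : 0 < Real.sinh a := Real.sinh_pos_iff.2 ha
  have hmem : ∀ s ∈ Icc 0 t, s ∈ Ioo (-(T n a)) (T n a) := fun s hs' =>
    ⟨by linarith [hs'.1], by linarith [hs'.2]⟩
  have hcf : ContinuousOn f (Icc 0 t) := fun s hs' =>
    (hf.2.2.2 s (hmem s hs')).1.continuousAt.continuousWithinAt
  obtain ⟨c, hc, h⟩ := exists_hasDerivAt_eq_slope (fun s => catPhi n a (f s)) (fun _ => 1) ht0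
    ((catPhi_cont n hn ha hT).comp_continuousOn hcf) (by
      intro s hs'
      have hsm := hmem s ⟨hs'.1.le, hs'.2.le⟩
      have hp := deriv_sol_pos n hn ha hf hs'.1 (hs'.2.trans ht)
      have hfi := first_integral n hn hf hsm
      have hge := sol_ge n hn ha hf hsm
      have hpw : 0 < Real.sinh a ^ (2 * n - 2) := pow_pos hs _
      have hgt : a < f s := by
        rcases hge.lt_or_eq with h | h
        · exact h
        · exfalso
          rw [← h] at hfi
          have : 0 < Real.sinh a ^ (2 * n - 2) * deriv f s ^ 2 := by positivity
          linarith
      have hH : catH n a (f s) * deriv f s = 1 := by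
        have : (Real.sinh (f s) / Real.sinh a) ^ (2 * n - 2) - 1 = deriv f s ^ 2 := by
          rw [div_pow, hfi]; field_simp; ring
        rw [catH, this, neg_div, Real.rpow_neg (by positivity), ← Real.sqrt_eq_rpow,
          Real.sqrt_sq hp.le, inv_mul_cancel₀ hp.ne']
      have := (catPhi_deriv n hn ha hT hgt).comp s (hf.2.2.2 s hsm).1
      rw [hH] at this
      exact this)
  simp only [hf.2.1, catPhi_self, sub_zero] at h
  field_simp at h
  exact h.symm

lemma sol_neg (n : ℕ) {a R : ℝ} {f : ℝ → ℝ} (hf : IsCatenarySolOn n a (Ioo (-R) R) f) :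
    IsCatenarySolOn n a (Ioo (-R) R) (fun t => f (-t)) := by
  obtain ⟨h0, h1, h2, h3⟩ := hf
  have hd : deriv (fun t => f (-t)) = fun t => -deriv f (-t) := by
    funext t; exact deriv_comp_neg f t
  refine ⟨h0, by simpa using h1, by rw [hd]; simpa using h2, fun t ht => ?_⟩
  obtain ⟨h4, h5⟩ := h3 (-t) ⟨by linarith [ht.2], by linarith [ht.1]⟩
  rw [hd]
  have h6 := h4.comp t (hasDerivAt_neg t)
  have h7 := (h5.comp t (hasDerivAt_neg t)).neg
  constructor
  · exact HasDerivAt.congr_deriv (f := fun t => f (-t)) h6 (by simp)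
  · exact HasDerivAt.congr_deriv (f := fun t => -deriv f (-t)) h7 (by simp)

lemma time_abs (n : ℕ) (hn : 2 ≤ n) {a : ℝ} (ha : 0 < a) (hT : 0 < T n a) {f : ℝ → ℝ}
    (hf : IsCatenarySolOn n a (Ioo (-(T n a)) (T n a)) f) {t : ℝ}
    (ht : t ∈ Ioo (-(T n a)) (T n a)) : catPhi n a (f t) = |t| := by
  rcases lt_trichotomy t 0 with h | h | h
  · have := time_pos n hn ha hT (sol_neg n hf) (t := -t) (by linarith) (by linarith [ht.1])
    simp only [neg_neg] at this
    rw [this, abs_of_neg h]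
  · rw [h, hf.2.1, catPhi_self, abs_zero]
  · rw [time_pos n hn ha hT hf h ht.2, abs_of_pos h]

/-- For `0 < a < b` there is exactly one `t₀ ∈ (0, min(T(a), T(b)))` with
`f(a,t₀) = f(b,t₀)`; consequently (by evenness of the solutions) the generating
catenaries `t ↦ (tanh(f(a,t)), t)` and `t ↦ (tanh(f(b,t)), t)` intersect at
exactly two points, symmetric with respect to `t = 0`. -/
theorem catenaries_intersect_twice (n : ℕ) (hn : 2 ≤ n) (a b : ℝ)
    (ha : 0 < a) (hab : a < b) (fa fb : ℝ → ℝ)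
    (hfa : IsCatenarySolOn n a (Set.Ioo (-(T n a)) (T n a)) fa)
    (hfb : IsCatenarySolOn n b (Set.Ioo (-(T n b)) (T n b)) fb) :
    (∃! t₀ : ℝ, t₀ ∈ Set.Ioo (0 : ℝ) (min (T n a) (T n b)) ∧ fa t₀ = fb t₀) ∧
      ∃ t₀ ∈ Set.Ioo (0 : ℝ) (min (T n a) (T n b)),
        {p : ℝ × ℝ | p.2 ∈ Set.Ioo (-(min (T n a) (T n b))) (min (T n a) (T n b)) ∧
            p.1 = Real.tanh (fa p.2) ∧ p.1 = Real.tanh (fb p.2)} =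
          {(Real.tanh (fa t₀), t₀), (Real.tanh (fa (-t₀)), -t₀)} := by

  have hb := ha.trans hab
  have hTa : 0 < T n a := hfa.1.2
  have hTb : 0 < T n b := hfb.1.2
  have hTT := T_lt n hn ha hab hTa hTb
  have hmin : min (T n a) (T n b) = T n a := min_eq_left hTT.le
  rw [hmin]
  have hDm := catPhi_diff_mono n hn ha hab hTa hTb
  have hma := catPhi_mono n hn ha hTa
  have hmb := catPhi_mono n hn hb hTb
  -- a crossing value
  obtain ⟨x₀, hx₀, hx₀e⟩ : ∃ x₀, b < x₀ ∧ catPhi n b x₀ = catPhi n a x₀ := by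
    have hlim := (catPhi_tendsto n hn hb hTb).sub (catPhi_tendsto n hn ha hTa)
    have hev := hlim.eventually (lt_mem_nhds (sub_pos.2 hTT))
    obtain ⟨y, hy, hyb⟩ := (hev.and (eventually_gt_atTop b)).exists
    have hneg : catPhi n b b - catPhi n a b < 0 := by
      have := hma (show a ≤ a from le_rfl) (show a ≤ b from hab.le) hab
      rw [catPhi_self] at this ⊢
      linarith
    obtain ⟨x, hx, hxe⟩ := intermediate_value_Ioo hyb.le
      (((catPhi_cont n hn hb hTb).sub (catPhi_cont n hn ha hTa)).continuousOn)
      (show (0 : ℝ) ∈ Ioo _ _ from ⟨hneg, hy⟩)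
    exact ⟨x, hx.1, sub_eq_zero.1 hxe⟩
  have hax₀ : a ≤ x₀ := by linarith
  set t₀ := catPhi n a x₀ with ht₀
  have ht₀p : 0 < t₀ := by
    have := hma (show a ≤ a from le_rfl) (show a ≤ x₀ from hax₀) (hab.trans hx₀)
    rwa [catPhi_self] at this
  have ht₀T : t₀ < T n a := catPhi_lt_T n hn ha hTa hax₀
  have hsub : ∀ t ∈ Ioo (-(T n a)) (T n a), t ∈ Ioo (-(T n b)) (T n b) := fun t ht =>
    ⟨by linarith [ht.1], by linarith [ht.2]⟩
  have key : ∀ t ∈ Ioo (-(T n a)) (T n a), (fa t = fb t ↔ |t| = t₀) := by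
    intro t ht
    have hA := time_abs n hn ha hTa hfa ht
    have hB := time_abs n hn hb hTb hfb (hsub t ht)
    have gA := sol_ge n hn ha hfa ht
    have gB := sol_ge n hn hb hfb (hsub t ht)
    constructor
    · intro h
      rw [h] at hA
      have : fb t = x₀ := hDm.injOn gB (show b ≤ x₀ from hx₀.le) (by
        show catPhi n b (fb t) - catPhi n a (fb t) = catPhi n b x₀ - catPhi n a x₀
        rw [hA, hB, hx₀e]; ring)
      rw [← hA, this]
    · intro h
      rw [hma.injOn gA (show a ≤ x₀ from hax₀) (by rw [hA, h]),
        hmb.injOn gB (show b ≤ x₀ from hx₀.le) (by rw [hB, h, hx₀e])]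
  have hm₀ : t₀ ∈ Ioo (-(T n a)) (T n a) := ⟨by linarith, ht₀T⟩
  have hm₁ : -t₀ ∈ Ioo (-(T n a)) (T n a) := ⟨by linarith, by linarith⟩
  have hE₀ : fa t₀ = fb t₀ := (key t₀ hm₀).2 (abs_of_pos ht₀p)
  have hE₁ : fa (-t₀) = fb (-t₀) := (key _ hm₁).2 (by rw [abs_neg, abs_of_pos ht₀p])
  refine ⟨⟨t₀, ⟨⟨ht₀p, ht₀T⟩, hE₀⟩, ?_⟩, t₀, ⟨ht₀p, ht₀T⟩, ?_⟩
  · rintro t ⟨ht, h⟩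
    have := (key t ⟨by linarith [ht.1], ht.2⟩).1 h
    rwa [abs_of_pos ht.1] at this
  · ext ⟨p, t⟩
    simp only [Set.mem_ofPred_eq, mem_insert_iff, mem_singleton_iff, Prod.mk.injEq]
    constructor
    · rintro ⟨ht, h1, h2⟩
      have h3 : fa t = fb t := Real.tanh_injective (h1.symm.trans h2)
      rcases eq_or_eq_neg_of_abs_eq ((key t ht).1 h3) with h | h
      · left; subst h; exact ⟨h1, rfl⟩
      · right; rw [h] at h1; exact ⟨h1, h⟩
    · rintro (⟨h1, h2⟩ | ⟨h1, h2⟩)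
      · rw [h2]; exact ⟨hm₀, h1, by rw [h1, hE₀]⟩
      · rw [h2]; exact ⟨hm₁, h1, by rw [h1, hE₁]⟩
end
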